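/- Let s ≥ 1, let 0 ≤ q ≤ s, and set n = T_s + q. Then Δ_n = s(s−1) + max{A(λ) + B(λ) : λ a partition of n with supp(λ) = s}. Moreover s(s−1) ≤ Δ_n ≤ s(s−1) + q, and if q > 0 then Δ_n ≥ s(s−1) + 1. -/

import Mathlib

/-!
Write `r` for the number of distinct part sizes of a partition of `n = T s + q`, `q ≤ s`.

* A set `S` of `r` positive integers has sum at least `T r` plus the number of its gaps
  (`T_add_gaps_le_sum`, by induction on the largest element: it is at least `r`, and at least
  `r + 1` if its predecessor is missing). Repeated parts contribute at least one more unit for each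
  repeated size, so `T r + A + B ≤ n` (`T_supp_add_bonus_le`).
* Hence `r ≤ s`, because `T (s + 1) > T s + q`; and if `r = s` then `A + B ≤ q`.
* If `r < s`, the trivial bounds `A, B ≤ r` give degree at most `r (r - 1) + 2 r = r (r + 1)`, which
  is at most `s (s - 1)`, so such a partition never beats the layer `r = s`.
* That layer is nonempty: it contains `1, 2, …, s` together with one extra part `q` when `q > 0`.
  The extra part repeats an existing size, so `B ≥ 1` in that case.
-/

namespace PartitionDegree

/-- The `m`-th triangular number. -/
def T (m : ℕ) : ℕ := m * (m + 1) / 2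

/-- The number of distinct part sizes of a partition. -/
def supp {n : ℕ} (lam : n.Partition) : ℕ := lam.parts.toFinset.card

/-- The gap-bonus count: distinct part sizes `L ≥ 2` such that `L - 1` is not a part size. -/
def gapBonus {n : ℕ} (lam : n.Partition) : ℕ :=
  (lam.parts.toFinset.filter (fun L => 2 ≤ L ∧ (L - 1) ∉ lam.parts)).card

/-- The multiplicity-bonus count: distinct part sizes occurring with multiplicity at least 2. -/
def multBonus {n : ℕ} (lam : n.Partition) : ℕ :=
  (lam.parts.toFinset.filter (fun L => 2 ≤ lam.parts.count L)).card

/-- The degree of a partition in the partition graph. -/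
def deg {n : ℕ} (lam : n.Partition) : ℕ :=
  supp lam * (supp lam - 1) + gapBonus lam + multBonus lam

/-- The maximal degree over all partitions of `n`. -/
def maxDeg (n : ℕ) : ℕ := Finset.univ.sup (fun lam : n.Partition => deg lam)

/-- `ρ(q)`: the maximum of `a + b` over pairs with `T a + T b ≤ q`. -/
noncomputable def rho (q : ℕ) : ℕ := sSup {c : ℕ | ∃ a b : ℕ, c = a + b ∧ T a + T b ≤ q}

/-- `mu` is the conjugate of `lam`: for each `k ≥ 1`, the multiplicity of `k` in `mu`
equals (number of parts of `lam` that are `≥ k`) minus (number of parts `≥ k + 1`). -/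
def IsConjugate {n : ℕ} (lam mu : n.Partition) : Prop :=
  ∀ k : ℕ, 1 ≤ k →
    mu.parts.count k =
      Multiset.countP (fun p => k ≤ p) lam.parts -
        Multiset.countP (fun p => k + 1 ≤ p) lam.parts

lemma two_mul_T (m : ℕ) : 2 * T m = m * (m + 1) :=
  Nat.mul_div_cancel' (Nat.even_mul_succ_self m).two_dvd

lemma T_succ (m : ℕ) : T (m + 1) = T m + (m + 1) := by
  have h1 := two_mul_T m
  have h2 := two_mul_T (m + 1)
  nlinarith

lemma T_mono {a b : ℕ} (h : a ≤ b) : T a ≤ T b :=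
  Nat.div_le_div_right (Nat.mul_le_mul h (by omega))

lemma T_add_gaps_le_sum (S : Finset ℕ) (hS : ∀ x ∈ S, 0 < x) :
    T S.card + (S.filter (fun L => 2 ≤ L ∧ (L - 1) ∉ S)).card ≤ ∑ x ∈ S, x := by
  induction S using Finset.induction_on_max with
  | empty => simp [T]
  | insert m S hlt ih =>
    have hm : m ∉ S := fun h => lt_irrefl _ (hlt m h)
    have ih := ih (fun x hx => hS x (Finset.mem_insert_of_mem hx))
    have hmpos : 0 < m := hS m (Finset.mem_insert_self m S)
    rw [Finset.card_insert_of_notMem hm, Finset.sum_insert hm, T_succ, Finset.filter_insert]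
    -- Adjoining a new maximum does not change which of the old elements are gaps.
    have hfil : S.filter (fun L => 2 ≤ L ∧ (L - 1) ∉ insert m S) =
        S.filter (fun L => 2 ≤ L ∧ (L - 1) ∉ S) := by
      refine Finset.filter_congr fun x hx => ?_
      have := hlt x hx
      have hne : x - 1 ≠ m := by omega
      simp [hne]
    rw [hfil]
    split_ifs with hgap
    · have hsub : S ⊆ Finset.Icc 1 (m - 2) := by
        intro x hx
        have h1 := hlt x hx
        have h2 := hS x (Finset.mem_insert_of_mem hx)
        have h3 : x ≠ m - 1 := by
          rintro rfl
          exact hgap.2 (Finset.mem_insert_of_mem hx)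
        rw [Finset.mem_Icc]
        omega
      have hcard := Finset.card_le_card hsub
      rw [Nat.card_Icc] at hcard
      rw [Finset.card_insert_of_notMem (by simp [hm])]
      omega
    · have hsub : S ⊆ Finset.Icc 1 (m - 1) := by
        intro x hx
        have h1 := hlt x hx
        have h2 := hS x (Finset.mem_insert_of_mem hx)
        rw [Finset.mem_Icc]
        omega
      have hcard := Finset.card_le_card hsub
      rw [Nat.card_Icc] at hcard
      omega

lemma T_supp_add_bonus_le {n : ℕ} (lam : n.Partition) :
    T (supp lam) + gapBonus lam + multBonus lam ≤ n := by
  have h1 := T_add_gaps_le_sum lam.parts.toFinset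
    (fun x hx => lam.parts_pos (Multiset.mem_toFinset.1 hx))
  simp only [Multiset.mem_toFinset] at h1
  have h2 : ∑ x ∈ lam.parts.toFinset, x + multBonus lam ≤ n := by
    conv_rhs => rw [← lam.parts_sum, Finset.sum_multiset_count]
    rw [multBonus, Finset.card_filter, ← Finset.sum_add_distrib]
    refine Finset.sum_le_sum fun x hx => ?_
    have hpos := lam.parts_pos (Multiset.mem_toFinset.1 hx)
    have hc : 1 ≤ lam.parts.count x := Multiset.one_le_count_iff_mem.2 (Multiset.mem_toFinset.1 hx)
    rw [smul_eq_mul]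
    split_ifs with h <;> nlinarith
  unfold supp gapBonus
  omega

lemma sum_Icc_eq_T (s : ℕ) : (Finset.Icc 1 s).val.sum = T s := by
  have h : ∑ x ∈ Finset.Icc 1 s, x = T s := by
    induction s with
    | zero => simp [T]
    | succ s ih => rw [Finset.sum_Icc_succ_top (by omega), ih, T_succ]
  rwa [Finset.sum_eq_multiset_sum, Multiset.map_id'] at h

/-- The witness is the staircase `1, …, s`, with `q` repeated once if `q > 0`. -/
lemma exists_supp_eq (s q : ℕ) (hqs : q ≤ s) :
    ∃ lam : (T s + q).Partition, supp lam = s ∧ (0 < q → 1 ≤ multBonus lam) := by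
  rcases Nat.eq_zero_or_pos q with rfl | hq
  · refine ⟨⟨(Finset.Icc 1 s).val, ?_, ?_⟩, ?_, ?_⟩
    · intro i hi
      exact (Finset.mem_Icc.1 (Finset.mem_val ▸ hi)).1
    · rw [sum_Icc_eq_T, add_zero]
    · simp [supp]
    · simp
  · have hmem : q ∈ Finset.Icc 1 s := Finset.mem_Icc.2 ⟨hq, hqs⟩
    refine ⟨⟨q ::ₘ (Finset.Icc 1 s).val, ?_, ?_⟩, ?_, fun _ => ?_⟩
    · intro i hi
      rcases Multiset.mem_cons.1 hi with rfl | hi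
      · exact hq
      · exact (Finset.mem_Icc.1 (Finset.mem_val ▸ hi)).1
    · rw [Multiset.sum_cons, sum_Icc_eq_T, add_comm]
    · rw [supp, Multiset.toFinset_cons, Finset.val_toFinset, Finset.insert_eq_of_mem hmem]
      simp
    · refine Finset.card_pos.2 ⟨q, Finset.mem_filter.2 ⟨by simp, ?_⟩⟩
      have : 1 ≤ (Finset.Icc 1 s).val.count q := Multiset.one_le_count_iff_mem.2 hmem
      rw [Multiset.count_cons_self]
      omega

lemma supp_le {s q : ℕ} (hqs : q ≤ s) (lam : (T s + q).Partition) : supp lam ≤ s := by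
  by_contra! h
  have h1 := T_supp_add_bonus_le lam
  have h2 := T_mono (Nat.succ_le_of_lt h)
  rw [Nat.succ_eq_add_one, T_succ] at h2
  omega

/-- Partitions below the top layer are dominated by the guaranteed value `s (s - 1)`. -/
lemma deg_le_of_supp_lt {n s : ℕ} (lam : n.Partition) (h : supp lam < s) :
    deg lam ≤ s * (s - 1) := by
  have hA : gapBonus lam ≤ supp lam := Finset.card_filter_le _ _
  have hB : multBonus lam ≤ supp lam := Finset.card_filter_le _ _
  unfold deg
  obtain ⟨t, rfl⟩ : ∃ t, s = t + 1 := ⟨s - 1, by omega⟩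
  have h1 : (supp lam + 1) * supp lam ≤ (t + 1) * t := Nat.mul_le_mul (by omega) (by omega)
  have h2 : supp lam * (supp lam - 1) + 2 * supp lam = (supp lam + 1) * supp lam := by
    cases supp lam with
    | zero => rfl
    | succ k => rw [Nat.add_sub_cancel]; ring
  rw [Nat.add_sub_cancel]
  omega

/-- reduction to the support-maximal layer, with the bounds
`s(s-1) ≤ Δ_n ≤ s(s-1) + q`, and `Δ_n ≥ s(s-1) + 1` when `q > 0`. -/
theorem support_maximal_reduction (s q : ℕ) (hs : 1 ≤ s) (hqs : q ≤ s) :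
    maxDeg (T s + q) =
        s * (s - 1) +
          (Finset.univ.filter (fun lam : (T s + q).Partition => supp lam = s)).sup
            (fun lam => gapBonus lam + multBonus lam) ∧
      s * (s - 1) ≤ maxDeg (T s + q) ∧
      maxDeg (T s + q) ≤ s * (s - 1) + q ∧
      (0 < q → s * (s - 1) + 1 ≤ maxDeg (T s + q)) := by
  have hle : ∀ lam : (T s + q).Partition, deg lam ≤ maxDeg (T s + q) := fun lam =>
    Finset.le_sup (f := fun lam : (T s + q).Partition => deg lam) (Finset.mem_univ lam)
  obtain ⟨mu, hmu, hmuB⟩ := exists_supp_eq s q hqs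
  have hmu_le := hle mu
  rw [deg, hmu] at hmu_le
  refine ⟨le_antisymm ?_ ?_, by omega, ?_, fun hq => by have := hmuB hq; omega⟩
  · refine Finset.sup_le fun lam _ => ?_
    rcases (supp_le hqs lam).lt_or_eq with h | h
    · exact (deg_le_of_supp_lt lam h).trans (Nat.le_add_right _ _)
    · rw [deg, h, add_assoc]
      exact Nat.add_le_add_left (Finset.le_sup
        (f := fun lam : (T s + q).Partition => gapBonus lam + multBonus lam)
        (Finset.mem_filter.2 ⟨Finset.mem_univ lam, h⟩)) _
  · -- The layer is nonempty, so its supremum is attained.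
    obtain ⟨lam, hlam, heq⟩ := Finset.exists_mem_eq_sup
      (Finset.univ.filter (fun lam : (T s + q).Partition => supp lam = s))
      ⟨mu, Finset.mem_filter.2 ⟨Finset.mem_univ mu, hmu⟩⟩
      (fun lam => gapBonus lam + multBonus lam)
    have h := hle lam
    rw [deg, (Finset.mem_filter.1 hlam).2] at h
    rw [heq]
    omega
  · refine Finset.sup_le fun lam _ => ?_
    rcases (supp_le hqs lam).lt_or_eq with h | h
    · exact (deg_le_of_supp_lt lam h).trans (Nat.le_add_right _ _)
    · have hb := T_supp_add_bonus_le lam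
      rw [h] at hb
      rw [deg, h]
      omega

end PartitionDegree
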